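/- Let N be a positive integer; write N = σ²q with q squarefree, let ε be the gcd of all integers a − d over matrices in Γ₀(N) with diagonal entries a, d, and set v(N) = gcd(σ, ε). Then every g ∈ SL(2,ℝ) normalizing the subgroup ±Γ₀(N) can be written as g = ±γ · w_m · Ω, where γ ∈ Γ₀(N), w_m is an Atkin–Lehner matrix for a Hall divisor m of N with gcd(m, 6) = 1, and Ω belongs to the subgroup of SL(2,ℝ) generated by the matrix S_{v(N)} = [[1, 1/v(N)],[0, 1]] together with Atkin–Lehner matrices w_{2^{v₂(N)}} and w_{3^{v₃(N)}} for the Hall divisors 2^{v₂(N)} and 3^{v₃(N)} of N. -/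

import Mathlib

open Matrix CongruenceSubgroup

/-- The reduction-of-scalars map `SL(2, ℤ) →* SL(2, ℝ)`. -/
def SL2ZtoSL2R : Matrix.SpecialLinearGroup (Fin 2) ℤ →* Matrix.SpecialLinearGroup (Fin 2) ℝ :=
  Matrix.SpecialLinearGroup.map (Int.castRingHom ℝ)

/-- The subgroup `±Γ₀(N)` of `SL(2, ℝ)`, generated by the image of `Γ₀(N)` and `-1`. -/
def PMGamma0 (N : ℕ) : Subgroup (Matrix.SpecialLinearGroup (Fin 2) ℝ) :=
  (Gamma0 N).map SL2ZtoSL2R ⊔ Subgroup.zpowers (-1)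

/-- `w` is an Atkin–Lehner matrix of level `N` for the Hall divisor `m` of `N`:
a matrix of the form `(1/√m)·!![ma, b; Nc, md]` with integer entries (and determinant 1,
which holds automatically as `w ∈ SL(2, ℝ)`). -/
def IsAtkinLehner (N m : ℕ) (w : Matrix.SpecialLinearGroup (Fin 2) ℝ) : Prop :=
  ∃ a b c d : ℤ, (w : Matrix (Fin 2) (Fin 2) ℝ) =
    (Real.sqrt m)⁻¹ • !![(m : ℝ) * (a : ℝ), (b : ℝ); (N : ℝ) * (c : ℝ), (m : ℝ) * (d : ℝ)]

/-!
Write `N = M * v ^ 2` and `x = diag(1, v)⁻¹ * g * diag(1, v)`. The additive span of `Γ₀(N)` contains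
`1`, `E₁₂`, `N E₂₁` and `ε E₁₁`, so their conjugates by `g` are integral of level `N`. Because
squares of the entries of `x` are already integral, the extra factors `v` and `ε` can be dropped:
`x` normalizes the Eichler order of level `M`, and its primitive integral multiple then has the
shape of an Atkin–Lehner matrix of level `M`.

Conversely `S_v` and `w_2`, `w_3` generate all of `diag(1, v) Γ₀(M) diag(1, v)⁻¹` modulo `Γ₀(N)`:
only the primes `2` and `3` can divide every `a - d`, hence `v`, and conjugating `S_v` by `w_p`
yields an element of `Γ₀(M)` whose lower left entry is `M` times a unit at `p`.
-/

open scoped MatrixGroups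

section Arithmetic

theorem exists_isCoprime_add_mul {a x : ℤ} (hax : IsCoprime a x) {h : ℕ} (hh : h ≠ 0) :
    ∃ k : ℤ, IsCoprime (a + k * x) h := by
  rcases eq_or_ne x 0 with rfl | hx
  · exact ⟨0, by simpa using hax.of_isCoprime_of_dvd_right (dvd_zero (h : ℤ))⟩
  have : NeZero (x.natAbs * h) := ⟨mul_ne_zero (Int.natAbs_ne_zero.mpr hx) hh⟩
  have hdvd : x.natAbs ∣ x.natAbs * h := dvd_mul_right _ _
  have hax' : IsCoprime a (x.natAbs : ℤ) :=
    hax.of_isCoprime_of_dvd_right (Int.natAbs_dvd.mpr dvd_rfl)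
  obtain ⟨u, hu⟩ := ZMod.unitsMap_surjective hdvd (ZMod.unitOfIsCoprime a hax')
  obtain ⟨y, hy⟩ := ZMod.intCast_surjective (u : ZMod (x.natAbs * h))
  have hyu : IsCoprime ((x.natAbs * h : ℕ) : ℤ) y :=
    (ZMod.coe_int_isUnit_iff_isCoprime y _).mp (hy ▸ u.isUnit)
  have hya : (y : ZMod x.natAbs) = a := by
    simpa [ZMod.unitsMap_val, ← hy, ZMod.cast_intCast hdvd] using congrArg Units.val hu
  obtain ⟨k, hk⟩ : x ∣ y - a := Int.natAbs_dvd.mp <| by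
    rw [← ZMod.intCast_zmod_eq_zero_iff_dvd]
    simp [hya]
  refine ⟨k, ?_⟩
  rw [show a + k * x = y by linear_combination -hk]
  exact (hyu.of_isCoprime_of_dvd_left (Int.natCast_dvd_natCast.mpr (dvd_mul_left _ _))).symm

theorem dvd_of_sq_dvd_squarefree_mul_sq {R : Type*} [CommRing R] [IsDomain R] [IsIntegrallyClosed R]
    [DecompositionMonoid R] {k q n : R} (hq : Squarefree q) (h : k ^ 2 ∣ q * n ^ 2) : k ∣ n := by
  rcases eq_or_ne k 0 with rfl | hk
  · have : q * n ^ 2 = 0 := by simpa using h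
    simpa [hq.ne_zero] using this
  obtain ⟨j, hj⟩ := h
  obtain ⟨m, hm⟩ : k ∣ q * n :=
    (IsIntegrallyClosed.pow_dvd_pow_iff two_ne_zero).mp ⟨q * j, by linear_combination q * hj⟩
  have hqm : q ∣ m := (hq.dvd_pow_iff_dvd two_ne_zero).mp
    ⟨j, mul_left_cancel₀ (pow_ne_zero 2 hk) (by linear_combination q * hj - (q * n + k * m) * hm)⟩
  obtain ⟨m', rfl⟩ := hqm
  exact ⟨m', mul_left_cancel₀ hq.ne_zero (by linear_combination hm)⟩

theorem mem_intCast_range_of_sq_mem {K : Type*} [Field K] [CharZero K] {t : K} {σ k q : ℤ}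
    (hk : k ≠ 0) (hσk : IsCoprime σ k) (hq : Squarefree q)
    (hkt : k * t ∈ (Int.castRingHom K).range)
    (ht : σ ^ 2 * q * t ^ 2 ∈ (Int.castRingHom K).range) : t ∈ (Int.castRingHom K).range := by
  obtain ⟨n, hn⟩ := hkt
  obtain ⟨j, hj⟩ := ht
  have hn' : (n : K) = k * t := hn
  have hj' : (j : K) = σ ^ 2 * q * t ^ 2 := hj
  have hdvd : k ^ 2 ∣ σ ^ 2 * (q * n ^ 2) := ⟨j, by
    have : (σ ^ 2 * (q * n ^ 2) : K) = k ^ 2 * j := by rw [hn', hj']; ring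
    exact_mod_cast this⟩
  obtain ⟨m, rfl⟩ := dvd_of_sq_dvd_squarefree_mul_sq hq (hσk.symm.pow.dvd_of_dvd_mul_left hdvd)
  refine ⟨m, mul_left_cancel₀ (Int.cast_ne_zero.mpr hk : (k : K) ≠ 0) ?_⟩
  simpa using hn'

theorem natCast_mul_mem_intCast_range {R : Type*} [Ring R] (n : ℕ) {t : R}
    (ht : t ∈ (Int.castRingHom R).range) : n * t ∈ (Int.castRingHom R).range :=
  mul_mem (natCast_mem _ n) ht

theorem dvd_of_mul_mem_intCast_range {R : Type*} [CommRing R] [CharZero R] {u : R} {k n : ℤ}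
    (hu : u * k = 1) (h : u * n ∈ (Int.castRingHom R).range) : k ∣ n := by
  obtain ⟨j, hj⟩ := h
  have hj' : (j : R) = u * n := hj
  have hn : (n : R) = k * j := by rw [hj']; linear_combination -n * hu
  exact ⟨j, by exact_mod_cast hn⟩

theorem exists_eq_smul_primitive {ι K : Type*} [Finite ι] [Nonempty ι] [Field K]
    {x : ι → K} {t : K} (ht : t ≠ 0) (h : ∀ i, t * x i ∈ (Int.castRingHom K).range) :
    ∃ (s : K) (X : ι → ℤ), (∀ i, x i = s * X i) ∧ ∀ e z : ℤ, (∀ i, e ∣ z * X i) → e ∣ z := by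
  have := Fintype.ofFinite ι
  choose y hy using h
  obtain ⟨X, hyX, hX⟩ := Finset.extract_gcd y Finset.univ_nonempty
  refine ⟨Finset.univ.gcd y / t, X, fun i => ?_, fun e z hez => ?_⟩
  · have hyi : ((Finset.univ.gcd y : ℤ) * X i : K) = t * x i := by
      rw [← hy i, hyX i (Finset.mem_univ i)]
      simp
    field_simp
    linear_combination -hyi
  · have hdvd := Finset.dvd_gcd fun i (_ : i ∈ Finset.univ) => hez i
    rwa [Finset.gcd_mul_left, hX, mul_one, dvd_normalize_iff] at hdvd

theorem mem_closure_of_forall_dvd {S : Set ℤ} {ε : ℕ}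
    (h : ∀ e : ℕ, (∀ t ∈ S, (e : ℤ) ∣ t) → e ∣ ε) : (ε : ℤ) ∈ AddSubgroup.closure S := by
  obtain ⟨a, ha⟩ := Int.subgroup_cyclic (AddSubgroup.closure S)
  rw [ha, ← AddSubgroup.zmultiples_eq_closure, Int.mem_zmultiples_iff, ← Int.natAbs_dvd,
    Int.natCast_dvd_natCast]
  refine h _ fun t ht => ?_
  rw [Int.natAbs_dvd, ← Int.mem_zmultiples_iff, AddSubgroup.zmultiples_eq_closure, ← ha]
  exact AddSubgroup.subset_closure ht

theorem mem_of_pow_mem_of_forall_prime {G : Type*} [Group G] {K : Subgroup G} {x : G} {n : ℕ}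
    (hn : x ^ n ∈ K) (hp : ∀ p, p.Prime → p ∣ n → ∃ t : ℤ, ¬ (p : ℤ) ∣ t ∧ x ^ t ∈ K) :
    x ∈ K := by
  obtain ⟨a, ha⟩ := Int.subgroup_cyclic (K.comap (zpowersHom G x)).toAddSubgroup'
  have mem_iff (t : ℤ) : x ^ t ∈ K ↔ a ∣ t := by
    rw [← Int.mem_zmultiples_iff, AddSubgroup.zmultiples_eq_closure, ← ha]
    simp [zpowersHom_apply]
  have hone : a.natAbs = 1 := Nat.eq_one_iff_not_exists_prime_dvd.mpr fun p hpp hpa => by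
    have han : a.natAbs ∣ n := Int.natAbs_dvd_natAbs.mpr ((mem_iff n).mp (by simpa using hn))
    obtain ⟨t, hpt, ht⟩ := hp p hpp (hpa.trans han)
    exact hpt ((Int.natCast_dvd.mpr hpa).trans ((mem_iff t).mp ht))
  simpa using (mem_iff 1).mpr (Int.isUnit_iff_natAbs_eq.mpr hone).dvd

end Arithmetic

section HallDivisor

/-- `m` is a Hall divisor of `N`, with the complementary divisor as a witness rather than
as the quotient `N / m`. -/
def IsHallDivisor (m N : ℕ) : Prop :=
  ∃ n, N = m * n ∧ m.Coprime n

variable {m e N p : ℕ}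

theorem IsHallDivisor.dvd (h : IsHallDivisor m N) : m ∣ N :=
  let ⟨n, hn, _⟩ := h
  ⟨n, hn⟩

theorem IsHallDivisor.gcd_div_eq_one (h : IsHallDivisor m N) (hN : 0 < N) :
    Nat.gcd m (N / m) = 1 := by
  obtain ⟨n, rfl, hmn⟩ := h
  rwa [Nat.mul_div_cancel_left _ (Nat.pos_of_mul_pos_right hN)]

theorem isHallDivisor_ordProj (hp : p.Prime) (hN : N ≠ 0) : IsHallDivisor (ordProj[p] N) N :=
  ⟨ordCompl[p] N, (Nat.ordProj_mul_ordCompl_eq_self N p).symm,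
    (Nat.coprime_ordCompl hp hN).pow_left _⟩

theorem IsHallDivisor.factorization_eq (h : IsHallDivisor m N) (hp : p.Prime) (hpm : p ∣ m) :
    m.factorization p = N.factorization p := by
  obtain ⟨n, rfl, hmn⟩ := h
  rw [Nat.factorization_mul_of_coprime hmn, Finsupp.add_apply,
    Nat.factorization_eq_zero_of_not_dvd (n := n)
      fun hpn => hp.one_lt.ne' (Nat.eq_one_of_dvd_coprimes hmn hpm hpn), add_zero]

theorem IsHallDivisor.ordCompl (h : IsHallDivisor m N) (hp : p.Prime) (hN : N ≠ 0) :
    IsHallDivisor (ordCompl[p] m) N := by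
  obtain ⟨n, rfl, hmn⟩ := h
  refine ⟨ordProj[p] m * n, ?_, ?_⟩
  · rw [← mul_assoc, mul_comm (ordCompl[p] m), Nat.ordProj_mul_ordCompl_eq_self]
  · exact ((Nat.coprime_ordCompl hp (left_ne_zero_of_mul hN)).symm.pow_right _).mul_right
      (hmn.coprime_dvd_left (Nat.ordCompl_dvd m p))

theorem IsHallDivisor.mul_right (h : IsHallDivisor m N) (hmk : m.Coprime e) :
    IsHallDivisor m (N * e) := by
  obtain ⟨n, rfl, hmn⟩ := h
  exact ⟨n * e, mul_assoc m n e, hmn.mul_right hmk⟩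

end HallDivisor

section DiagConj

variable {F : Type*} [Field F] {t : F}

/-- Conjugation by `diag(1, t)` on `SL(2, F)`. It carries matrices of level `M * t ^ 2` to
matrices of level `M` when applied backwards, and turns `!![1, 1; 0, 1]` into
`!![1, 1 / t; 0, 1]`. -/
def diagConj (ht : t ≠ 0) : SL(2, F) ≃* SL(2, F) where
  toFun g := ⟨!![g 0 0, g 0 1 / t; t * g 1 0, g 1 1], by
    have hg := g.det_coe
    rw [det_fin_two] at hg
    rw [det_fin_two_of]
    field_simp
    exact hg⟩
  invFun g := ⟨!![g 0 0, t * g 0 1; g 1 0 / t, g 1 1], by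
    have hg := g.det_coe
    rw [det_fin_two] at hg
    rw [det_fin_two_of]
    field_simp
    exact hg⟩
  left_inv g := by ext i j; fin_cases i <;> fin_cases j <;> simp [ht, mul_div_cancel₀]
  right_inv g := by ext i j; fin_cases i <;> fin_cases j <;> simp [ht, mul_div_cancel₀]
  map_mul' g k := by
    refine Subtype.ext ?_
    change _ = !![g 0 0, g 0 1 / t; t * g 1 0, g 1 1] * !![k 0 0, k 0 1 / t; t * k 1 0, k 1 1]
    ext i j
    fin_cases i <;> fin_cases j <;> simp [Matrix.mul_apply, Fin.sum_univ_two] <;> field_simp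

theorem coe_diagConj (ht : t ≠ 0) (g : SL(2, F)) :
    (diagConj ht g : Matrix (Fin 2) (Fin 2) F) = !![g 0 0, g 0 1 / t; t * g 1 0, g 1 1] := rfl

theorem coe_diagConj_symm (ht : t ≠ 0) (g : SL(2, F)) :
    ((diagConj ht).symm g : Matrix (Fin 2) (Fin 2) F) =
      !![g 0 0, t * g 0 1; g 1 0 / t, g 1 1] := rfl

end DiagConj

section AtkinLehner

variable {N M m n e k h : ℕ} {w x y : SL(2, ℝ)}

theorem coe_SL2ZtoSL2R (γ : SL(2, ℤ)) :
    (SL2ZtoSL2R γ : Matrix (Fin 2) (Fin 2) ℝ) = !![(γ 0 0 : ℝ), γ 0 1; γ 1 0, γ 1 1] := by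
  ext i j; fin_cases i <;> fin_cases j <;> rfl

theorem mem_Gamma0_iff_dvd {γ : SL(2, ℤ)} : γ ∈ Gamma0 N ↔ (N : ℤ) ∣ γ 1 0 := by
  rw [Gamma0_mem, ZMod.intCast_zmod_eq_zero_iff_dvd]

theorem isAtkinLehner_iff : IsAtkinLehner N m w ↔ ∃ (s : ℝ) (a b c d : ℤ), s ^ 2 * m = 1 ∧
    (w : Matrix (Fin 2) (Fin 2) ℝ) = s • !![(m * a : ℝ), b; N * c, m * d] := by
  constructor
  · rintro ⟨a, b, c, d, hw⟩
    have hm : (m : ℝ) ≠ 0 := fun hm => by simpa [hw, hm] using w.det_coe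
    exact ⟨(√m)⁻¹, a, b, c, d, by simp [hm], hw⟩
  · rintro ⟨s, a, b, c, d, hs, hw⟩
    have hsq : s ^ 2 = (√m)⁻¹ ^ 2 := by
      rw [inv_pow, Real.sq_sqrt m.cast_nonneg, eq_inv_of_mul_eq_one_left hs]
    rcases sq_eq_sq_iff_eq_or_eq_neg.mp hsq with rfl | rfl
    · exact ⟨a, b, c, d, hw⟩
    · exact ⟨-a, -b, -c, -d, by simp [hw]⟩

theorem IsAtkinLehner.exists_entries (hw : IsAtkinLehner (m * n) m w) :
    ∃ (s : ℝ) (a b c d : ℤ), s ^ 2 * m = 1 ∧ m * a * d - n * b * c = 1 ∧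
      (w : Matrix (Fin 2) (Fin 2) ℝ) = s • !![(m * a : ℝ), b; m * n * c, m * d] := by
  obtain ⟨s, a, b, c, d, hs, hw⟩ := isAtkinLehner_iff.mp hw
  have hdet : (m * a * d - n * b * c : ℝ) = 1 := by
    have := w.det_coe
    simp only [hw, det_smul, det_fin_two_of, Fintype.card_fin] at this
    push_cast at this
    linear_combination this - (m * a * d - n * b * c) * hs
  exact ⟨s, a, b, c, d, hs, by exact_mod_cast hdet, by simpa using hw⟩

theorem IsAtkinLehner.mul {f e₁ e₂ : ℕ} (hN : f * e₁ * e₂ ∣ N)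
    (hx : IsAtkinLehner N (f * e₁) x) (hy : IsAtkinLehner N (f * e₂) y) :
    IsAtkinLehner N (e₁ * e₂) (x * y) := by
  obtain ⟨k, rfl⟩ := hN
  obtain ⟨s, a, b, c, d, hs, hx⟩ := isAtkinLehner_iff.mp hx
  obtain ⟨t, a', b', c', d', ht, hy⟩ := isAtkinLehner_iff.mp hy
  push_cast at hs ht hx hy
  refine isAtkinLehner_iff.mpr ⟨s * t * f, f * a * a' + k * b * c', e₁ * a * b' + e₂ * b * d',
    e₂ * c * a' + e₁ * d * c', k * c * b' + f * d * d', ?_, ?_⟩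
  · push_cast
    linear_combination ht + t ^ 2 * f * e₂ * hs
  · rw [Matrix.SpecialLinearGroup.coe_mul, hx, hy]
    ext i j
    fin_cases i <;> fin_cases j <;> simp <;> ring

theorem IsAtkinLehner.inv (hw : IsAtkinLehner N m w) : IsAtkinLehner N m w⁻¹ := by
  obtain ⟨a, b, c, d, hw⟩ := hw
  refine ⟨d, -b, -c, a, ?_⟩
  rw [Matrix.SpecialLinearGroup.coe_inv, hw, adjugate_smul, adjugate_fin_two_of]
  simp

theorem IsHallDivisor.exists_isAtkinLehner (h : IsHallDivisor m N) (hN : N ≠ 0) :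
    ∃ w, IsAtkinLehner N m w := by
  obtain ⟨n, rfl, hmn⟩ := h
  obtain ⟨x, y, hxy⟩ := Nat.isCoprime_iff_coprime.mpr hmn
  have hs : (√m)⁻¹ ^ 2 * (m : ℝ) = 1 := by simp [left_ne_zero_of_mul hN]
  have hxy' : (x * m + y * n : ℝ) = 1 := by exact_mod_cast hxy
  refine ⟨⟨(√m)⁻¹ • !![(m * x : ℝ), -y; ↑(m * n), m], ?_⟩, x, -y, 1, 1, by simp⟩
  rw [det_smul, det_fin_two_of, Fintype.card_fin]
  push_cast
  linear_combination hs + (√m)⁻¹ ^ 2 * m * hxy'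

theorem isAtkinLehner_one_iff : IsAtkinLehner N 1 w ↔ ∃ γ ∈ Gamma0 N, SL2ZtoSL2R γ = w := by
  constructor
  · rintro ⟨a, b, c, d, hw⟩
    have hdet : (a * d - b * (N * c) : ℝ) = 1 := by
      rw [← w.det_coe, hw]
      simp [det_fin_two]
    obtain ⟨γ, hγ⟩ : ∃ γ : SL(2, ℤ), (γ : Matrix (Fin 2) (Fin 2) ℤ) = !![a, b; N * c, d] :=
      ⟨⟨_, by rw [det_fin_two_of]; exact_mod_cast hdet⟩, rfl⟩
    refine ⟨γ, mem_Gamma0_iff_dvd.mpr ⟨c, by simp [hγ]⟩, Subtype.ext ?_⟩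
    rw [hw, coe_SL2ZtoSL2R, hγ]
    simp
  · rintro ⟨γ, hγ, rfl⟩
    obtain ⟨c, hc⟩ := mem_Gamma0_iff_dvd.mp hγ
    exact ⟨γ 0 0, γ 0 1, c, γ 1 1, by simp [coe_SL2ZtoSL2R, hc]⟩

theorem IsAtkinLehner.diagConj_symm (hh : (h : ℝ) ≠ 0) (hk : k ∣ h)
    (hw : IsAtkinLehner (M * h ^ 2) (k ^ 2 * e) w) :
    IsAtkinLehner M e ((diagConj hh).symm w) := by
  obtain ⟨l, rfl⟩ := hk
  obtain ⟨s, a, b, c, d, hs, hw⟩ := isAtkinLehner_iff.mp hw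
  push_cast at hs hh hw
  refine isAtkinLehner_iff.mpr ⟨s * k, k * a, l * b, l * c, k * d, by linear_combination hs, ?_⟩
  rw [coe_diagConj_symm, hw]
  ext i j
  fin_cases i <;> fin_cases j <;> simp <;> field_simp

end AtkinLehner

section Generation

open ModularGroup

variable {M h : ℕ} {γ : SL(2, ℤ)}

/-- The lower unipotent matrix `!![1, 0; c, 1]`, the counterpart of `ModularGroup.T`. -/
def lowerUnipotent (c : ℤ) : SL(2, ℤ) := ⟨!![1, 0; c, 1], by simp⟩

theorem coe_lowerUnipotent (c : ℤ) :
    (lowerUnipotent c : Matrix (Fin 2) (Fin 2) ℤ) = !![1, 0; c, 1] := rfl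

theorem lowerUnipotent_zpow (c t : ℤ) : lowerUnipotent c ^ t = lowerUnipotent (c * t) := by
  have conj_T (b : ℤ) : lowerUnipotent b = S * T ^ (-b) * S⁻¹ := by
    refine Subtype.ext ?_
    simp [coe_lowerUnipotent, coe_S, coe_T_zpow]
  rw [conj_T, conj_T, conj_zpow, ← _root_.zpow_mul, neg_mul]

theorem exists_T_zpow_mul_mul_mem_Gamma0 (hh : h ≠ 0) {c : ℤ} (hc : γ 1 0 = M * c) :
    ∃ i j t d : ℤ, (h : ℤ) ∣ c + d * t ∧
      T ^ i * γ * T ^ j * lowerUnipotent M ^ t ∈ Gamma0 (M * h) ∧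
      (h : ℤ) ∣ (T ^ i * γ * T ^ j * lowerUnipotent M ^ t) 0 1 := by
  obtain ⟨a, b, d₀, hγ⟩ : ∃ a b d₀ : ℤ, (γ : Matrix (Fin 2) (Fin 2) ℤ) = !![a, b; M * c, d₀] :=
    ⟨γ 0 0, γ 0 1, γ 1 1, hc ▸ eta_fin_two _⟩
  have hdet : a * d₀ - b * (M * c) = 1 := by rw [← det_fin_two_of, ← hγ, γ.det_coe]
  obtain ⟨j, d', y, hd⟩ := exists_isCoprime_add_mul
    (⟨a, -b, by linear_combination hdet⟩ : IsCoprime d₀ (M * c)) hh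
  refine ⟨-(d' * (j * a + b)), j, -(d' * c), d₀ + j * (M * c),
    ⟨y * c, by linear_combination -c * hd⟩, mem_Gamma0_iff_dvd.mpr ⟨y * c, ?_⟩,
    ⟨y * (j * a + b), ?_⟩⟩ <;>
    simp [lowerUnipotent_zpow, coe_T_zpow, coe_lowerUnipotent, hγ]
  · linear_combination -M * c * hd
  · linear_combination -(j * a + b) * hd

theorem Gamma0_le_of_forall_prime {K : Subgroup SL(2, ℤ)} (hh : h ≠ 0) (hT : T ∈ K)
    (hK : ∀ γ ∈ Gamma0 (M * h), (h : ℤ) ∣ γ 0 1 → γ ∈ K)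
    (hp : ∀ p, p.Prime → p ∣ h → ∃ γ ∈ K, ∃ c : ℤ, γ 1 0 = M * c ∧ ¬ (p : ℤ) ∣ c) :
    Gamma0 M ≤ K := by
  have reduce {γ : SL(2, ℤ)} {i j t : ℤ} (h : T ^ i * γ * T ^ j * lowerUnipotent M ^ t ∈ K) :
      γ ∈ K ↔ lowerUnipotent M ^ t ∈ K := by
    have mem_iff : T ^ i * γ * T ^ j ∈ K ↔ γ ∈ K := by
      rw [K.mul_mem_cancel_right (K.zpow_mem hT j), K.mul_mem_cancel_left (K.zpow_mem hT i)]
    rw [← mem_iff]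
    exact ⟨fun hx => (K.mul_mem_cancel_left hx).mp h, fun hy => (K.mul_mem_cancel_right hy).mp h⟩
  have hlower : lowerUnipotent M ∈ K := by
    refine mem_of_pow_mem_of_forall_prime (n := h) (hK _ ?_ ?_) fun p hpp hph => ?_
    · rw [← zpow_natCast, lowerUnipotent_zpow]
      exact mem_Gamma0_iff_dvd.mpr (by simp [coe_lowerUnipotent])
    · rw [← zpow_natCast, lowerUnipotent_zpow]
      simp [coe_lowerUnipotent]
    · obtain ⟨γ, hγ, c, hc, hpc⟩ := hp p hpp hph
      obtain ⟨i, j, t, d, hdvd, hmem, h01⟩ := exists_T_zpow_mul_mul_mem_Gamma0 hh hc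
      have hpt : ¬ (p : ℤ) ∣ t := fun hpt => hpc <| (dvd_add_left (hpt.mul_left d)).mp
        ((Int.natCast_dvd_natCast.mpr hph).trans hdvd)
      exact ⟨t, hpt, (reduce (hK _ hmem h01)).mp hγ⟩
  intro γ hγ
  obtain ⟨c, hc⟩ := mem_Gamma0_iff_dvd.mp hγ
  obtain ⟨i, j, t, d, -, hmem, h01⟩ := exists_T_zpow_mul_mul_mem_Gamma0 hh hc
  exact (reduce (hK _ hmem h01)).mpr (K.zpow_mem hlower t)

end Generation

section Removal

open ModularGroup

variable {N M m n e h p : ℕ} {w x : SL(2, ℝ)} {H : Subgroup SL(2, ℝ)}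

theorem IsAtkinLehner.exists_conj_diagConj_T (hN : m * n = M * h ^ 2) (hh : (h : ℝ) ≠ 0)
    (hw : IsAtkinLehner (m * n) m w) : ∃ (γ : SL(2, ℤ)) (c : ℤ), γ 1 0 = M * c ∧ IsCoprime c m ∧
      w * diagConj hh (SL2ZtoSL2R T) * w⁻¹ = diagConj hh (SL2ZtoSL2R γ) := by
  obtain ⟨s, a, b, c, d, -, hdet, hw⟩ := hw.exists_entries
  obtain ⟨γ, hγ⟩ : ∃ γ : SL(2, ℤ), (γ : Matrix (Fin 2) (Fin 2) ℤ) =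
      !![1 - M * h * a * c, m * a ^ 2; M * (-n * c ^ 2), 1 + M * h * a * c] := by
    refine ⟨⟨_, ?_⟩, rfl⟩
    have hN' : (m * n : ℤ) = M * h ^ 2 := by exact_mod_cast hN
    rw [det_fin_two_of]
    linear_combination M * a ^ 2 * c ^ 2 * hN'
  have hn : IsCoprime (n : ℤ) m := ⟨-b * c, a * d, by linear_combination hdet⟩
  have hc : IsCoprime c m := ⟨-n * b, a * d, by linear_combination hdet⟩
  refine ⟨γ, -n * c ^ 2, by simp [hγ], hn.neg_left.mul_left hc.pow_left, ?_⟩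
  have hN' : (m * n : ℝ) = M * h ^ 2 := by exact_mod_cast hN
  have hdet' : (m * a * d - n * b * c : ℝ) = 1 := by exact_mod_cast hdet
  rw [mul_inv_eq_iff_eq_mul]
  refine Subtype.ext ?_
  simp only [Matrix.SpecialLinearGroup.coe_mul, coe_diagConj, coe_SL2ZtoSL2R, hw, hγ, coe_T]
  ext i j
  fin_cases i <;> fin_cases j <;> simp <;> field_simp
  · linear_combination -s * m * a ^ 2 * c * hN'
  · linear_combination -s * m * a * hdet' - s * a * b * c * hN'
  · ring
  · linear_combination s * c * hN' - s * c * h ^ 2 * M * hdet'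

theorem diagConj_mem_of_mem_Gamma0 (hh : (h : ℝ) ≠ 0) (hT : diagConj hh (SL2ZtoSL2R T) ∈ H)
    (hΓ : ∀ γ ∈ Gamma0 (M * h ^ 2), SL2ZtoSL2R γ ∈ H)
    (hp : ∀ p, p.Prime → p ∣ h →
      ∃ m, IsHallDivisor m (M * h ^ 2) ∧ p ∣ m ∧ ∃ w ∈ H, IsAtkinLehner (M * h ^ 2) m w)
    {γ : SL(2, ℤ)} (hγ : γ ∈ Gamma0 M) : diagConj hh (SL2ZtoSL2R γ) ∈ H := by
  suffices Gamma0 M ≤ H.comap ((diagConj hh).toMonoidHom.comp SL2ZtoSL2R) from this hγ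
  refine Gamma0_le_of_forall_prime (Nat.cast_ne_zero.mp hh) hT (fun γ hγ h01 => ?_)
    fun p hpp hph => ?_
  · obtain ⟨c, hc⟩ := mem_Gamma0_iff_dvd.mp hγ
    obtain ⟨b, hb⟩ := h01
    have hb' : (γ 0 1 : ℝ) / h = b := by
      rw [hb, Int.cast_mul, Int.cast_natCast, mul_div_cancel_left₀ _ hh]
    have hc' : (h : ℝ) * γ 1 0 = M * h ^ 2 * c := by
      rw [hc]
      push_cast
      ring
    obtain ⟨γ', hγ', hγγ'⟩ := isAtkinLehner_one_iff.mp
      (⟨γ 0 0, b, c, γ 1 1, by simp [coe_diagConj, coe_SL2ZtoSL2R, hb', hc']⟩ :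
        IsAtkinLehner (M * h ^ 2) 1 (diagConj hh (SL2ZtoSL2R γ)))
    change diagConj hh (SL2ZtoSL2R γ) ∈ H
    exact hγγ' ▸ hΓ γ' hγ'
  · obtain ⟨m, ⟨n, hN, -⟩, hpm, w, hwH, hw⟩ := hp p hpp hph
    obtain ⟨γ, c, hc, hcm, hconj⟩ := (hN ▸ hw).exists_conj_diagConj_T hN.symm hh
    refine ⟨γ, ?_, c, hc, fun hpc => ?_⟩
    · change diagConj hh (SL2ZtoSL2R γ) ∈ H
      exact hconj ▸ H.mul_mem (H.mul_mem hwH hT) (H.inv_mem hwH)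
    · exact (Nat.prime_iff_prime_int.mp hpp).not_isUnit
        (hcm.isUnit_of_dvd' hpc (Int.natCast_dvd_natCast.mpr hpm))

theorem IsHallDivisor.SL2ZtoSL2R_mem (hm : IsHallDivisor m N) (hN : N ≠ 0)
    (hH : ∀ w, IsAtkinLehner N m w → w ∈ H) {γ : SL(2, ℤ)} (hγ : γ ∈ Gamma0 N) :
    SL2ZtoSL2R γ ∈ H := by
  obtain ⟨w, hw⟩ := hm.exists_isAtkinLehner hN
  have hwγ : IsAtkinLehner N (m * 1) (w * SL2ZtoSL2R γ) :=
    IsAtkinLehner.mul (f := 1) (by simpa using hm.dvd) (by simpa using hw)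
      (isAtkinLehner_one_iff.mpr ⟨γ, hγ, rfl⟩)
  exact (H.mul_mem_cancel_left (hH w hw)).mp (hH _ (by simpa using hwγ))

theorem IsAtkinLehner.exists_mul_ordCompl (hx : IsAtkinLehner M e x) (he : IsHallDivisor e M)
    (hp : p.Prime) (hH : ∃ y ∈ H, IsAtkinLehner M (ordProj[p] M) y) :
    ∃ y ∈ H, IsAtkinLehner M (ordCompl[p] e) (x * y) := by
  by_cases hpe : p ∣ e
  · obtain ⟨y, hyH, hy⟩ := hH
    have he' : ordProj[p] M * ordCompl[p] e = e := by
      rw [← he.factorization_eq hp hpe, Nat.ordProj_mul_ordCompl_eq_self]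
    refine ⟨y, hyH, ?_⟩
    have := IsAtkinLehner.mul (f := ordProj[p] M) (e₁ := ordCompl[p] e) (e₂ := 1)
      (by rw [he', mul_one]; exact he.dvd) (he'.symm ▸ hx) (by rwa [mul_one])
    rwa [mul_one] at this
  · exact ⟨1, H.one_mem, by
      rwa [Nat.factorization_eq_zero_of_not_dvd hpe, pow_zero, Nat.div_one, mul_one]⟩

theorem IsAtkinLehner.exists_mul_forall_not_dvd (hM : M ≠ 0) (P : Finset ℕ)
    (hP : ∀ p ∈ P, p.Prime ∧ ∃ y ∈ H, IsAtkinLehner M (ordProj[p] M) y)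
    (hx : IsAtkinLehner M e x) (he : IsHallDivisor e M) :
    ∃ f, IsHallDivisor f M ∧ (∀ p ∈ P, ¬ p ∣ f) ∧ ∃ y ∈ H, IsAtkinLehner M f (x * y) := by
  induction P using Finset.induction_on with
  | empty => exact ⟨e, he, by simp, 1, H.one_mem, by rwa [mul_one]⟩
  | insert p P _ ih =>
    rw [Finset.forall_mem_insert] at hP
    obtain ⟨⟨hp, hy⟩, hP⟩ := hP
    obtain ⟨f, hf, hPf, y, hyH, hxy⟩ := ih hP
    obtain ⟨z, hzH, hxyz⟩ := hxy.exists_mul_ordCompl hf hp hy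
    have hf0 : f ≠ 0 := ne_zero_of_dvd_ne_zero hM hf.dvd
    refine ⟨ordCompl[p] f, hf.ordCompl hp hM, ?_, y * z, H.mul_mem hyH hzH, by rwa [← mul_assoc]⟩
    rw [Finset.forall_mem_insert]
    exact ⟨Nat.not_dvd_ordCompl hp hf0,
      fun r hr hrf => hPf r hr (hrf.trans (Nat.ordCompl_dvd f p))⟩

theorem exists_isAtkinLehner_ordProj_diagConj_symm (hM : M ≠ 0) (hh : (h : ℝ) ≠ 0) (hp : p.Prime)
    (hH : ∀ w, IsAtkinLehner (M * h ^ 2) (ordProj[p] (M * h ^ 2)) w → w ∈ H) :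
    ∃ y ∈ H.comap (diagConj hh).toMonoidHom, IsAtkinLehner M (ordProj[p] M) y := by
  have hh0 : h ≠ 0 := Nat.cast_ne_zero.mp hh
  have hN : M * h ^ 2 ≠ 0 := mul_ne_zero hM (pow_ne_zero 2 hh0)
  obtain ⟨w, hw⟩ := (isHallDivisor_ordProj hp hN).exists_isAtkinLehner hN
  have hpow : ordProj[p] (M * h ^ 2) = (ordProj[p] h) ^ 2 * ordProj[p] M := by
    rw [Nat.factorization_mul hM (pow_ne_zero 2 hh0), Nat.factorization_pow]
    simp only [Finsupp.add_apply, Finsupp.smul_apply, smul_eq_mul]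
    ring
  exact ⟨(diagConj hh).symm w, by simpa using hH w hw,
    (hpow ▸ hw).diagConj_symm hh (Nat.ordProj_dvd h p)⟩

theorem exists_isAtkinLehner_inv_mul_diagConj_mem (hM : M ≠ 0) (hh : (h : ℝ) ≠ 0) {P : Finset ℕ}
    (hP : ∀ p ∈ P, p.Prime) (hhP : h.primeFactors ⊆ P) (hT : diagConj hh (SL2ZtoSL2R T) ∈ H)
    (hΓ : ∀ γ ∈ Gamma0 (M * h ^ 2), SL2ZtoSL2R γ ∈ H)
    (hH : ∀ p ∈ P, ∀ w, IsAtkinLehner (M * h ^ 2) (ordProj[p] (M * h ^ 2)) w → w ∈ H)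
    (he : IsHallDivisor e M) (hx : IsAtkinLehner M e x) :
    ∃ m, IsHallDivisor m (M * h ^ 2) ∧ (∀ p ∈ P, ¬ p ∣ m) ∧
      ∃ w, IsAtkinLehner (M * h ^ 2) m w ∧ w⁻¹ * diagConj hh x ∈ H := by
  have hh0 : h ≠ 0 := Nat.cast_ne_zero.mp hh
  have hN : M * h ^ 2 ≠ 0 := mul_ne_zero hM (pow_ne_zero 2 hh0)
  obtain ⟨f, hf, hPf, y, hyH, hxy⟩ := hx.exists_mul_forall_not_dvd hM P
    (fun p hp => ⟨hP p hp, exists_isAtkinLehner_ordProj_diagConj_symm hM hh (hP p hp) (hH p hp)⟩) he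
  have hfh : f.Coprime (h ^ 2) := Nat.Coprime.pow_right 2 <| Nat.coprime_of_dvd
    fun p hp hpf hph => hPf p (hhP (Nat.mem_primeFactors.mpr ⟨hp, hph, hh0⟩)) hpf
  have hfN : IsHallDivisor f (M * h ^ 2) := hf.mul_right hfh
  obtain ⟨w, hw⟩ := hfN.exists_isAtkinLehner hN
  have hwM : IsAtkinLehner M f ((diagConj hh).symm w) :=
    IsAtkinLehner.diagConj_symm hh (one_dvd h) (by simpa using hw)
  obtain ⟨γ, hγ, hγw⟩ : ∃ γ ∈ Gamma0 M, SL2ZtoSL2R γ = (diagConj hh).symm w * (x * y) :=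
    isAtkinLehner_one_iff.mp <| IsAtkinLehner.mul (f := f) (e₁ := 1) (e₂ := 1)
      (by simpa using hf.dvd) (by simpa using hwM) (by simpa using hxy)
  have hγH : diagConj hh (SL2ZtoSL2R γ) ∈ H :=
    diagConj_mem_of_mem_Gamma0 hh hT hΓ (fun p hp hph => by
      have hpP : p ∈ P := hhP (Nat.mem_primeFactors.mpr ⟨hp, hph, hh0⟩)
      have hpN : p ∣ M * h ^ 2 := (dvd_pow hph two_ne_zero).mul_left M
      have hall := isHallDivisor_ordProj hp hN
      obtain ⟨w, hw⟩ := hall.exists_isAtkinLehner hN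
      exact ⟨_, hall, dvd_pow_self p (hp.factorization_pos_of_dvd hN hpN).ne', w, hH p hpP w hw,
        hw⟩) hγ
  refine ⟨f, hfN, hPf, w⁻¹, hw.inv, ?_⟩
  rw [hγw, map_mul, map_mul, MulEquiv.apply_symm_apply, ← mul_assoc] at hγH
  rw [inv_inv]
  exact (H.mul_mem_cancel_right hyH).mp hγH

theorem exists_isAtkinLehner_inv_mul_diagConj_mem_closure (hM : M ≠ 0) (hh : (h : ℝ) ≠ 0)
    (hh23 : h.primeFactors ⊆ {2, 3}) (he : IsHallDivisor e M) (hx : IsAtkinLehner M e x) :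
    ∃ m, IsHallDivisor m (M * h ^ 2) ∧ m.Coprime 6 ∧
      ∃ w, IsAtkinLehner (M * h ^ 2) m w ∧ w⁻¹ * diagConj hh x ∈ Subgroup.closure
        ({S : SL(2, ℝ) | (S : Matrix (Fin 2) (Fin 2) ℝ) = !![1, (h : ℝ)⁻¹; 0, 1]} ∪
          {w | IsAtkinLehner (M * h ^ 2) (ordProj[2] (M * h ^ 2)) w} ∪
          {w | IsAtkinLehner (M * h ^ 2) (ordProj[3] (M * h ^ 2)) w}) := by
  set H := Subgroup.closure
    ({S : SL(2, ℝ) | (S : Matrix (Fin 2) (Fin 2) ℝ) = !![1, (h : ℝ)⁻¹; 0, 1]} ∪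
      {w | IsAtkinLehner (M * h ^ 2) (ordProj[2] (M * h ^ 2)) w} ∪
      {w | IsAtkinLehner (M * h ^ 2) (ordProj[3] (M * h ^ 2)) w})
  have hN : M * h ^ 2 ≠ 0 := mul_ne_zero hM (pow_ne_zero 2 (Nat.cast_ne_zero.mp hh))
  have hT : diagConj hh (SL2ZtoSL2R T) ∈ H := Subgroup.subset_closure <| Or.inl <| Or.inl <| by
    simp [coe_diagConj, coe_SL2ZtoSL2R, coe_T]
  have h2 (w) (hw : IsAtkinLehner (M * h ^ 2) (ordProj[2] (M * h ^ 2)) w) : w ∈ H :=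
    Subgroup.subset_closure (Or.inl (Or.inr hw))
  have h3 (w) (hw : IsAtkinLehner (M * h ^ 2) (ordProj[3] (M * h ^ 2)) w) : w ∈ H :=
    Subgroup.subset_closure (Or.inr hw)
  obtain ⟨m, hm, hm23, hw⟩ := exists_isAtkinLehner_inv_mul_diagConj_mem hM hh
    (by simp [Nat.prime_two, Nat.prime_three]) hh23 hT
    (fun γ hγ => (isHallDivisor_ordProj Nat.prime_two hN).SL2ZtoSL2R_mem hN h2 hγ)
    (by simpa using ⟨h2, h3⟩) he hx
  obtain ⟨hm2, hm3⟩ : ¬ 2 ∣ m ∧ ¬ 3 ∣ m := by simpa using hm23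
  have hm6 : m.Coprime (2 * 3) := Nat.Coprime.mul_right
    (Nat.prime_two.coprime_iff_not_dvd.mpr hm2).symm
    (Nat.prime_three.coprime_iff_not_dvd.mpr hm3).symm
  exact ⟨m, hm, hm6, hw⟩

end Removal

section DiagonalDifferences

variable {N e p : ℕ}

/-- The differences of the diagonal entries of the matrices in `Γ₀(N)`. -/
def diagDiffs (N : ℕ) : Set ℤ := {t | ∃ γ ∈ Gamma0 N, t = γ 0 0 - γ 1 1}

theorem exists_mem_diagDiffs_intCast_eq (u : (ZMod N)ˣ) :
    ∃ t ∈ diagDiffs N, (t : ZMod N) = (u : ZMod N) - (u⁻¹ : (ZMod N)ˣ) := by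
  obtain ⟨a, ha⟩ := ZMod.intCast_surjective (u : ZMod N)
  obtain ⟨d, hd⟩ := ZMod.intCast_surjective ((u⁻¹ : (ZMod N)ˣ) : ZMod N)
  obtain ⟨b, hb⟩ : (N : ℤ) ∣ a * d - 1 := by
    rw [← ZMod.intCast_zmod_eq_zero_iff_dvd, Int.cast_sub, Int.cast_mul, ha, hd, Units.mul_inv,
      Int.cast_one, sub_self]
  obtain ⟨γ, hγ⟩ : ∃ γ : SL(2, ℤ), (γ : Matrix (Fin 2) (Fin 2) ℤ) = !![a, b; N, d] :=
    ⟨⟨_, by rw [det_fin_two_of]; linear_combination hb⟩, rfl⟩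
  refine ⟨a - d, ⟨γ, mem_Gamma0_iff_dvd.mpr (by simp [hγ]), by simp [hγ]⟩, ?_⟩
  rw [Int.cast_sub, ha, hd]

theorem natCast_mem_diagDiffs : (N : ℤ) ∈ diagDiffs N := by
  obtain ⟨γ, hγ⟩ : ∃ γ : SL(2, ℤ),
      (γ : Matrix (Fin 2) (Fin 2) ℤ) = (!![1 + N, 1; N, 1] : Matrix (Fin 2) (Fin 2) ℤ) :=
    ⟨⟨_, by simp [det_fin_two_of]⟩, rfl⟩
  exact ⟨γ, mem_Gamma0_iff_dvd.mpr (by simp [hγ]), by simp [hγ]⟩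

/-- Reduce a lift `u` of the unit `2` of `ℤ/p`: the difference `u - u⁻¹` becomes `3 / 2`. -/
theorem prime_eq_two_or_three_of_forall_dvd_diagDiffs (hN : N ≠ 0) (hp : p.Prime)
    (h : ∀ t ∈ diagDiffs N, (p : ℤ) ∣ t) : p = 2 ∨ p = 3 := by
  have : NeZero N := ⟨hN⟩
  have : Fact p.Prime := ⟨hp⟩
  have hpN : p ∣ N := Int.natCast_dvd_natCast.mp (h _ natCast_mem_diagDiffs)
  by_contra! hne
  have h2 : (2 : ZMod p) ≠ 0 := fun h2 => hne.1 <|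
    (Nat.prime_dvd_prime_iff_eq hp Nat.prime_two).mp ((ZMod.natCast_eq_zero_iff 2 p).mp h2)
  have h3 : (3 : ZMod p) ≠ 0 := fun h3 => hne.2 <|
    (Nat.prime_dvd_prime_iff_eq hp Nat.prime_three).mp ((ZMod.natCast_eq_zero_iff 3 p).mp h3)
  obtain ⟨u, hu⟩ := ZMod.unitsMap_surjective hpN (Units.mk0 2 h2)
  obtain ⟨t, ht, htu⟩ := exists_mem_diagDiffs_intCast_eq u
  have hcast (w : (ZMod N)ˣ) : ZMod.castHom hpN (ZMod p) w = ZMod.unitsMap hpN w := rfl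
  have htp : (t : ZMod p) = 2 - 2⁻¹ := by
    rw [← map_intCast (ZMod.castHom hpN (ZMod p)) t, htu, map_sub, hcast, hcast, map_inv, hu]
    simp
  rw [(ZMod.intCast_zmod_eq_zero_iff_dvd t p).mpr (h t ht)] at htp
  field_simp at htp
  exact h3 (by linear_combination -htp)

theorem primeFactors_subset_of_forall_dvd_diagDiffs (hN : N ≠ 0)
    (h : ∀ t ∈ diagDiffs N, (e : ℤ) ∣ t) : e.primeFactors ⊆ {2, 3} := fun p hp => by
  have hpe : (p : ℤ) ∣ e := Int.natCast_dvd_natCast.mpr (Nat.dvd_of_mem_primeFactors hp)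
  simpa using prime_eq_two_or_three_of_forall_dvd_diagDiffs hN (Nat.prime_of_mem_primeFactors hp)
    fun t ht => hpe.trans (h t ht)

end DiagonalDifferences

section EichlerOrder

variable {N M : ℕ} {x : SL(2, ℝ)}

/-- The Eichler order of level `M` in `M₂(ℝ)`: the integer matrices whose lower left entry is
divisible by `M`. Only its additive structure is used. -/
def eichlerOrder (M : ℕ) : AddSubgroup (Matrix (Fin 2) (Fin 2) ℝ) where
  carrier := {X | ∃ a b c d : ℤ, X = !![(a : ℝ), b; M * c, d]}
  zero_mem' := ⟨0, 0, 0, 0, by ext i j; fin_cases i <;> fin_cases j <;> simp⟩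
  add_mem' := by
    rintro _ _ ⟨a, b, c, d, rfl⟩ ⟨a', b', c', d', rfl⟩
    exact ⟨a + a', b + b', c + c', d + d', by simp [mul_add]⟩
  neg_mem' := by
    rintro _ ⟨a, b, c, d, rfl⟩
    exact ⟨-a, -b, -c, -d, by simp⟩

theorem of_mem_eichlerOrder_iff (hM : (M : ℝ) ≠ 0) {p q r t : ℝ} :
    !![p, q; r, t] ∈ eichlerOrder M ↔
      p ∈ (Int.castRingHom ℝ).range ∧ q ∈ (Int.castRingHom ℝ).range ∧
        r / M ∈ (Int.castRingHom ℝ).range ∧ t ∈ (Int.castRingHom ℝ).range := by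
  constructor
  · rintro ⟨a, b, c, d, h⟩
    obtain ⟨⟨rfl, rfl⟩, rfl, rfl⟩ : (p = a ∧ q = b) ∧ r = M * c ∧ t = d := by simpa using h
    exact ⟨⟨a, rfl⟩, ⟨b, rfl⟩, ⟨c, by simp [hM]⟩, ⟨d, rfl⟩⟩
  · rintro ⟨⟨a, rfl⟩, ⟨b, rfl⟩, ⟨c, hc⟩, ⟨d, rfl⟩⟩
    refine ⟨a, b, c, d, ?_⟩
    rw [← (div_eq_iff_mul_eq hM).mp hc.symm]
    simp [mul_comm]

theorem eichlerOrder_le {S : AddSubgroup (Matrix (Fin 2) (Fin 2) ℝ)} (h1 : 1 ∈ S)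
    (h00 : !![1, 0; 0, 0] ∈ S) (h01 : !![0, 1; 0, 0] ∈ S) (h10 : !![0, 0; (M : ℝ), 0] ∈ S) :
    eichlerOrder M ≤ S := by
  rintro _ ⟨a, b, c, d, rfl⟩
  have hX : !![(a : ℝ), b; M * c, d] = (a - d) • !![1, 0; 0, 0] + d • (1 : Matrix _ _ ℝ) +
      b • !![0, 1; 0, 0] + c • !![0, 0; (M : ℝ), 0] := by
    rw [Matrix.one_fin_two]
    ext i j; fin_cases i <;> fin_cases j <;> simp [mul_comm]
  rw [hX]
  exact S.add_mem (S.add_mem (S.add_mem (S.zsmul_mem h00 _) (S.zsmul_mem h1 _))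
    (S.zsmul_mem h01 _)) (S.zsmul_mem h10 _)

/-- The additive map `X ↦ x * X * x⁻¹` on `M₂(ℝ)`, with `x⁻¹` written as the adjugate. -/
def conjHom (x : SL(2, ℝ)) : Matrix (Fin 2) (Fin 2) ℝ →+ Matrix (Fin 2) (Fin 2) ℝ where
  toFun X := (x : Matrix (Fin 2) (Fin 2) ℝ) * X * adjugate (x : Matrix (Fin 2) (Fin 2) ℝ)
  map_zero' := by simp
  map_add' X Y := by rw [mul_add, add_mul]

theorem conjHom_apply (x : SL(2, ℝ)) (X : Matrix (Fin 2) (Fin 2) ℝ) :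
    conjHom x X = (x : Matrix (Fin 2) (Fin 2) ℝ) * X * adjugate (x : Matrix (Fin 2) (Fin 2) ℝ) :=
  rfl

theorem conjHom_coe (x y : SL(2, ℝ)) : conjHom x y = (x * y * x⁻¹ : SL(2, ℝ)) := rfl

theorem conjHom_one (x : SL(2, ℝ)) : conjHom x 1 = 1 := by
  rw [conjHom_apply, mul_one, mul_adjugate, x.det_coe, one_smul]

theorem conjHom_of {α β γ δ : ℝ} (hx : (x : Matrix (Fin 2) (Fin 2) ℝ) = !![α, β; γ, δ])
    (p q r t : ℝ) : conjHom x !![p, q; r, t] =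
      !![(α * p + β * r) * δ - (α * q + β * t) * γ, (α * q + β * t) * α - (α * p + β * r) * β;
        (γ * p + δ * r) * δ - (γ * q + δ * t) * γ, (γ * q + δ * t) * α - (γ * p + δ * r) * β] := by
  rw [conjHom_apply, hx, adjugate_fin_two_of]
  ext i j
  fin_cases i <;> fin_cases j <;> simp <;> ring

theorem of_zero_one_mem {S : AddSubgroup (Matrix (Fin 2) (Fin 2) ℝ)}
    (hS : ∀ γ ∈ Gamma0 N, (SL2ZtoSL2R γ : Matrix (Fin 2) (Fin 2) ℝ) ∈ S) :
    !![0, 1; 0, 0] ∈ S := by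
  have hT : ModularGroup.T ∈ Gamma0 N := mem_Gamma0_iff_dvd.mpr (by simp [ModularGroup.coe_T])
  convert S.sub_mem (hS _ hT) (hS 1 (one_mem _)) using 1
  ext i j; fin_cases i <;> fin_cases j <;> simp [coe_SL2ZtoSL2R, ModularGroup.coe_T]

theorem of_one_zero_mem {S : AddSubgroup (Matrix (Fin 2) (Fin 2) ℝ)}
    (hS : ∀ γ ∈ Gamma0 N, (SL2ZtoSL2R γ : Matrix (Fin 2) (Fin 2) ℝ) ∈ S) :
    !![0, 0; (N : ℝ), 0] ∈ S := by
  have hL : lowerUnipotent N ∈ Gamma0 N := mem_Gamma0_iff_dvd.mpr (by simp [coe_lowerUnipotent])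
  convert S.sub_mem (hS _ hL) (hS 1 (one_mem _)) using 1
  ext i j; fin_cases i <;> fin_cases j <;> simp [coe_SL2ZtoSL2R, coe_lowerUnipotent]

theorem of_zero_zero_mem {S : AddSubgroup (Matrix (Fin 2) (Fin 2) ℝ)}
    (hS : ∀ γ ∈ Gamma0 N, (SL2ZtoSL2R γ : Matrix (Fin 2) (Fin 2) ℝ) ∈ S) {ε : ℤ}
    (hε : ε ∈ AddSubgroup.closure (diagDiffs N)) : !![(ε : ℝ), 0; 0, 0] ∈ S := by
  suffices AddSubgroup.closure (diagDiffs N) ≤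
      S.comap (zmultiplesHom _ !![1, 0; 0, 0]) by simpa using this hε
  rw [AddSubgroup.closure_le]
  rintro _ ⟨γ, hγ, rfl⟩
  obtain ⟨c, hc⟩ := mem_Gamma0_iff_dvd.mp hγ
  have hX : (γ 0 0 - γ 1 1) • !![(1 : ℝ), 0; 0, 0] = (SL2ZtoSL2R γ : Matrix (Fin 2) (Fin 2) ℝ) -
      γ 1 1 • (SL2ZtoSL2R 1 : Matrix (Fin 2) (Fin 2) ℝ) - γ 0 1 • !![0, 1; 0, 0] -
        c • !![0, 0; (N : ℝ), 0] := by
    rw [coe_SL2ZtoSL2R, map_one, Matrix.SpecialLinearGroup.coe_one, Matrix.one_fin_two, hc]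
    ext i j; fin_cases i <;> fin_cases j <;> simp [mul_comm]
  change (γ 0 0 - γ 1 1) • !![(1 : ℝ), 0; 0, 0] ∈ S
  rw [hX]
  exact S.sub_mem (S.sub_mem (S.sub_mem (hS γ hγ) (S.zsmul_mem (hS 1 (one_mem _)) _))
    (S.zsmul_mem (of_zero_one_mem hS) _)) (S.zsmul_mem (of_one_zero_mem hS) _)

theorem SL2ZtoSL2R_mem_PMGamma0 {γ : SL(2, ℤ)} (hγ : γ ∈ Gamma0 N) :
    SL2ZtoSL2R γ ∈ PMGamma0 N :=
  Subgroup.mem_sup_left (Subgroup.mem_map_of_mem _ hγ)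

theorem coe_mem_eichlerOrder_of_mem_PMGamma0 (hx : x ∈ PMGamma0 N) :
    (x : Matrix (Fin 2) (Fin 2) ℝ) ∈ eichlerOrder N := by
  have hle : PMGamma0 N ≤ (Gamma0 N).map SL2ZtoSL2R := by
    refine sup_le le_rfl (Subgroup.zpowers_le.mpr ⟨-1, ?_, ?_⟩)
    · exact mem_Gamma0_iff_dvd.mpr (by simp)
    · ext i j; fin_cases i <;> fin_cases j <;> simp [coe_SL2ZtoSL2R]
  obtain ⟨γ, hγ, rfl⟩ := hle hx
  obtain ⟨c, hc⟩ := mem_Gamma0_iff_dvd.mp hγ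
  exact ⟨γ 0 0, γ 0 1, c, γ 1 1, by simp [coe_SL2ZtoSL2R, hc]⟩

theorem conjHom_SL2ZtoSL2R_mem_of_mem_normalizer (hx : x ∈ Subgroup.normalizer (PMGamma0 N))
    {γ : SL(2, ℤ)} (hγ : γ ∈ Gamma0 N) : conjHom x (SL2ZtoSL2R γ) ∈ eichlerOrder N := by
  rw [conjHom_coe]
  exact coe_mem_eichlerOrder_of_mem_PMGamma0
    ((Subgroup.mem_normalizer_iff.mp hx _).mp (SL2ZtoSL2R_mem_PMGamma0 hγ))

theorem conjHom_zero_one_mem_iff (hM : (M : ℝ) ≠ 0) :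
    conjHom x !![0, 1; 0, 0] ∈ eichlerOrder M ↔ x 0 0 ^ 2 ∈ (Int.castRingHom ℝ).range ∧
      x 0 0 * x 1 0 ∈ (Int.castRingHom ℝ).range ∧ x 1 0 ^ 2 / M ∈ (Int.castRingHom ℝ).range := by
  rw [conjHom_of (eta_fin_two _), of_mem_eichlerOrder_iff hM]
  simp only [mul_zero, zero_mul, mul_one, add_zero, zero_sub, sub_zero, neg_div, neg_mem_iff,
    mul_comm (x 1 0) (x 0 0), ← sq]
  tauto

theorem conjHom_one_zero_mem_iff (hM : (M : ℝ) ≠ 0) :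
    conjHom x !![0, 0; (M : ℝ), 0] ∈ eichlerOrder M ↔ x 1 1 ^ 2 ∈ (Int.castRingHom ℝ).range ∧
      M * (x 0 1 * x 1 1) ∈ (Int.castRingHom ℝ).range ∧
        M * x 0 1 ^ 2 ∈ (Int.castRingHom ℝ).range := by
  have h00 : x 0 1 * M * x 1 1 = M * (x 0 1 * x 1 1) := by ring
  have h01 : x 0 1 * M * x 0 1 = M * x 0 1 ^ 2 := by ring
  have h10 : x 1 1 * M * x 1 1 / M = x 1 1 ^ 2 := by field_simp
  have h11 : x 1 1 * M * x 0 1 = M * (x 0 1 * x 1 1) := by ring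
  rw [conjHom_of (eta_fin_two _), of_mem_eichlerOrder_iff hM]
  simp only [mul_zero, zero_mul, zero_add, add_zero, zero_sub, sub_zero, neg_mem_iff, h00, h01,
    h10, h11]
  tauto

theorem conjHom_zero_zero_mem_iff (hM : (M : ℝ) ≠ 0) (t : ℝ) :
    conjHom x !![t, 0; 0, 0] ∈ eichlerOrder M ↔
      t * (x 0 0 * x 1 1) ∈ (Int.castRingHom ℝ).range ∧
        t * (x 0 0 * x 0 1) ∈ (Int.castRingHom ℝ).range ∧
          t * (x 1 0 * x 1 1 / M) ∈ (Int.castRingHom ℝ).range ∧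
            t * (x 0 1 * x 1 0) ∈ (Int.castRingHom ℝ).range := by
  rw [conjHom_of (eta_fin_two _), of_mem_eichlerOrder_iff hM]
  have h00 : (x 0 0 * t + x 0 1 * 0) * x 1 1 - (x 0 0 * 0 + x 0 1 * 0) * x 1 0 =
    t * (x 0 0 * x 1 1) := by ring
  have h01 : (x 0 0 * 0 + x 0 1 * 0) * x 0 0 - (x 0 0 * t + x 0 1 * 0) * x 0 1 =
    -(t * (x 0 0 * x 0 1)) := by ring
  have h10 : ((x 1 0 * t + x 1 1 * 0) * x 1 1 - (x 1 0 * 0 + x 1 1 * 0) * x 1 0) / M =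
    t * (x 1 0 * x 1 1 / M) := by ring
  have h11 : (x 1 0 * 0 + x 1 1 * 0) * x 0 0 - (x 1 0 * t + x 1 1 * 0) * x 0 1 =
    -(t * (x 0 1 * x 1 0)) := by ring
  rw [h00, h01, h10, h11, neg_mem_iff, neg_mem_iff]

theorem eichlerOrder_le_comap_conjHom_iff :
    eichlerOrder M ≤ (eichlerOrder M).comap (conjHom x) ↔
      conjHom x !![0, 1; 0, 0] ∈ eichlerOrder M ∧
        conjHom x !![0, 0; (M : ℝ), 0] ∈ eichlerOrder M ∧
          conjHom x !![1, 0; 0, 0] ∈ eichlerOrder M := by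
  constructor
  · exact fun h => ⟨h ⟨0, 1, 0, 0, by simp⟩, h ⟨0, 0, 1, 0, by simp⟩, h ⟨1, 0, 0, 0, by simp⟩⟩
  · rintro ⟨h01, h10, h00⟩
    refine eichlerOrder_le ⟨1, 0, 0, 1, ?_⟩ h00 h01 h10
    rw [conjHom_one, Matrix.one_fin_two]
    simp

theorem conjHom_zero_one_mem_of_diagConj {h : ℕ} (hM : (M : ℝ) ≠ 0) (hh : (h : ℝ) ≠ 0)
    (h01 : conjHom (diagConj hh x) !![0, 1; 0, 0] ∈ eichlerOrder (M * h ^ 2)) :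
    conjHom x !![0, 1; 0, 0] ∈ eichlerOrder M := by
  rw [conjHom_zero_one_mem_iff (by push_cast; positivity)] at h01
  simp only [coe_diagConj, of_apply, cons_val', cons_val_zero, cons_val_one, cons_val_fin_one,
    Nat.cast_mul, Nat.cast_pow] at h01
  obtain ⟨hsq00, hmul, hsq10⟩ := h01
  have hsq10' : x 1 0 ^ 2 / M ∈ (Int.castRingHom ℝ).range := by
    convert hsq10 using 1; field_simp
  refine (conjHom_zero_one_mem_iff hM).mpr ⟨hsq00, ?_, hsq10'⟩
  refine mem_intCast_range_of_sq_mem (k := h) (by exact_mod_cast hh) isCoprime_one_left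
    squarefree_one ?_ ?_
  · convert hmul using 1; push_cast; ring
  · convert natCast_mul_mem_intCast_range M (mul_mem hsq00 hsq10') using 1; push_cast; field_simp

theorem conjHom_one_zero_mem_of_diagConj {h : ℕ} (hM : (M : ℝ) ≠ 0) (hh : (h : ℝ) ≠ 0)
    (h10 : conjHom (diagConj hh x) !![0, 0; ((M * h ^ 2 : ℕ) : ℝ), 0] ∈
      eichlerOrder (M * h ^ 2)) :
    conjHom x !![0, 0; (M : ℝ), 0] ∈ eichlerOrder M := by
  rw [conjHom_one_zero_mem_iff (by push_cast; positivity)] at h10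
  simp only [coe_diagConj, of_apply, cons_val', cons_val_zero, cons_val_one, cons_val_fin_one,
    Nat.cast_mul, Nat.cast_pow] at h10
  obtain ⟨hsq11, hmul, hsq01⟩ := h10
  have hsq01' : M * x 0 1 ^ 2 ∈ (Int.castRingHom ℝ).range := by
    convert hsq01 using 1; field_simp
  refine (conjHom_one_zero_mem_iff hM).mpr ⟨hsq11, ?_, hsq01'⟩
  refine mem_intCast_range_of_sq_mem (k := h) (by exact_mod_cast hh) isCoprime_one_left
    squarefree_one ?_ ?_
  · convert hmul using 1; push_cast; field_simp
  · convert natCast_mul_mem_intCast_range M (mul_mem hsq01' hsq11) using 1; push_cast; ring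

theorem conjHom_zero_zero_mem_of_diagConj {σ q h ε : ℕ} (hσ : σ ≠ 0) (hq : Squarefree q)
    (hσε : σ.Coprime ε) (hε : ε ≠ 0) (hh : (h : ℝ) ≠ 0)
    (h01 : conjHom x !![0, 1; 0, 0] ∈ eichlerOrder (σ ^ 2 * q))
    (h10 : conjHom x !![0, 0; ((σ ^ 2 * q : ℕ) : ℝ), 0] ∈ eichlerOrder (σ ^ 2 * q))
    (h00 : conjHom (diagConj hh x) !![((ε * h : ℕ) : ℝ), 0; 0, 0] ∈
      eichlerOrder (σ ^ 2 * q * h ^ 2)) :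
    conjHom x !![1, 0; 0, 0] ∈ eichlerOrder (σ ^ 2 * q) := by
  have hσ' : (σ : ℝ) ≠ 0 := by exact_mod_cast hσ
  have hq' : (q : ℝ) ≠ 0 := by exact_mod_cast hq.ne_zero
  have hM : ((σ ^ 2 * q : ℕ) : ℝ) ≠ 0 := by push_cast; positivity
  have hεh : (ε * h : ℤ) ≠ 0 := mul_ne_zero (by exact_mod_cast hε) (by exact_mod_cast hh)
  obtain ⟨hsq00, -, hsq10⟩ := (conjHom_zero_one_mem_iff hM).mp h01
  obtain ⟨hsq11, -, hsq01⟩ := (conjHom_one_zero_mem_iff hM).mp h10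
  rw [conjHom_zero_zero_mem_iff (by push_cast; positivity)] at h00
  simp only [coe_diagConj, of_apply, cons_val', cons_val_zero, cons_val_one, cons_val_fin_one,
    Nat.cast_mul, Nat.cast_pow] at h00 hsq10 hsq01 hM
  obtain ⟨had, hab, hcd, -⟩ := h00
  have descent {t : ℝ} := mem_intCast_range_of_sq_mem (t := t) (by exact_mod_cast hε)
    (Nat.isCoprime_iff_coprime.mpr hσε) (Int.squarefree_natCast.mpr hq)
  have had' : x 0 0 * x 1 1 ∈ (Int.castRingHom ℝ).range := by
    refine mem_intCast_range_of_sq_mem hεh isCoprime_one_left squarefree_one ?_ ?_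
    · convert had using 1; push_cast; ring
    · convert mul_mem hsq00 hsq11 using 1; push_cast; ring
  rw [conjHom_zero_zero_mem_iff (by exact_mod_cast hM)]
  simp only [one_mul, Nat.cast_mul, Nat.cast_pow]
  refine ⟨had', descent ?_ ?_, descent ?_ ?_, ?_⟩
  · convert hab using 1; push_cast; field_simp
  · convert mul_mem hsq00 hsq01 using 1; push_cast; ring
  · convert hcd using 1; push_cast; field_simp
  · convert mul_mem hsq10 hsq11 using 1; push_cast; field_simp
  · have hdet := x.det_coe
    rw [det_fin_two] at hdet
    convert sub_mem had' (one_mem _) using 1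
    linear_combination -hdet

/-- Integrality of squares removes the factors `h` and `ε` that conjugation by `diag(1, h)`
introduces. -/
theorem eichlerOrder_le_comap_conjHom {σ q h ε : ℕ} (hσ : σ ≠ 0) (hq : Squarefree q)
    (hσε : σ.Coprime ε) (hε : ε ≠ 0) (hh : (h : ℝ) ≠ 0)
    (hεmem : ((ε * h : ℕ) : ℤ) ∈ AddSubgroup.closure (diagDiffs (σ ^ 2 * q * h ^ 2)))
    (hx : diagConj hh x ∈ Subgroup.normalizer (PMGamma0 (σ ^ 2 * q * h ^ 2))) :
    eichlerOrder (σ ^ 2 * q) ≤ (eichlerOrder (σ ^ 2 * q)).comap (conjHom x) := by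
  have hM : ((σ ^ 2 * q : ℕ) : ℝ) ≠ 0 := by
    exact_mod_cast mul_ne_zero (pow_ne_zero 2 hσ) hq.ne_zero
  have hS (γ) (hγ : γ ∈ Gamma0 (σ ^ 2 * q * h ^ 2)) :
      (SL2ZtoSL2R γ : Matrix (Fin 2) (Fin 2) ℝ) ∈
        (eichlerOrder (σ ^ 2 * q * h ^ 2)).comap (conjHom (diagConj hh x)) :=
    conjHom_SL2ZtoSL2R_mem_of_mem_normalizer hx hγ
  have h01 := conjHom_zero_one_mem_of_diagConj hM hh (of_zero_one_mem hS)
  have h10 := conjHom_one_zero_mem_of_diagConj hM hh (of_one_zero_mem hS)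
  exact eichlerOrder_le_comap_conjHom_iff.mpr ⟨h01, h10,
    conjHom_zero_zero_mem_of_diagConj hσ hq hσε hε hh h01 h10 (of_zero_zero_mem hS hεmem)⟩

theorem exists_ne_zero_forall_mul_mem_of_conjHom_mem (hM : (M : ℝ) ≠ 0)
    (h01 : conjHom x !![0, 1; 0, 0] ∈ eichlerOrder M)
    (h00 : conjHom x !![1, 0; 0, 0] ∈ eichlerOrder M) :
    ∃ t ≠ 0, ∀ i j, t * x i j ∈ (Int.castRingHom ℝ).range := by
  obtain ⟨haa, hac, hcc⟩ := (conjHom_zero_one_mem_iff hM).mp h01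
  obtain ⟨had, hab, hcd, hbc⟩ := (conjHom_zero_zero_mem_iff hM 1).mp h00
  have mul_of_div {u : ℝ} (hu : u / M ∈ (Int.castRingHom ℝ).range) :
      u ∈ (Int.castRingHom ℝ).range := by
    simpa [mul_div_cancel₀, hM] using natCast_mul_mem_intCast_range M hu
  rw [one_mul] at had hab hcd hbc
  rcases eq_or_ne (x 0 0) 0 with h0 | h0
  · have h1 : x 1 0 ≠ 0 := fun h1 => by
      have hdet := x.det_coe
      rw [det_fin_two, h0, h1] at hdet
      simp at hdet
    refine ⟨x 1 0, h1, fun i j => ?_⟩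
    fin_cases i <;> fin_cases j
    · simpa [mul_comm] using hac
    · simpa [mul_comm] using hbc
    · simpa [sq] using mul_of_div hcc
    · simpa using mul_of_div hcd
  · refine ⟨x 0 0, h0, fun i j => ?_⟩
    fin_cases i <;> fin_cases j
    · simpa [sq] using haa
    · simpa using hab
    · simpa using hac
    · simpa using had

theorem exists_eq_smul_primitive_of_forall_mul_mem {t : ℝ} (ht : t ≠ 0)
    (h : ∀ i j, t * x i j ∈ (Int.castRingHom ℝ).range) :
    ∃ (s : ℝ) (A B C D : ℤ), (x : Matrix (Fin 2) (Fin 2) ℝ) = s • !![(A : ℝ), B; C, D] ∧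
      ∀ e z : ℤ, e ∣ z * A → e ∣ z * B → e ∣ z * C → e ∣ z * D → e ∣ z := by
  obtain ⟨s, X, hX, hprim⟩ := exists_eq_smul_primitive ht fun i : Fin 2 × Fin 2 => h i.1 i.2
  refine ⟨s, X (0, 0), X (0, 1), X (1, 0), X (1, 1), ?_, fun e z hA hB hC hD => hprim e z ?_⟩
  · ext i j; fin_cases i <;> fin_cases j <;> simp [← hX]
  · rintro ⟨i, j⟩
    fin_cases i <;> fin_cases j <;> assumption

theorem exists_natCast_eq_det {s : ℝ} {A B C D : ℤ}
    (hx : (x : Matrix (Fin 2) (Fin 2) ℝ) = s • !![(A : ℝ), B; C, D]) :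
    ∃ e : ℕ, A * D - B * C = e ∧ s ^ 2 * e = 1 := by
  have hs : s ^ 2 * ((A * D - B * C : ℤ) : ℝ) = 1 := by
    rw [← x.det_coe, hx, det_smul, det_fin_two_of, Fintype.card_fin]
    push_cast
    ring
  have hpos : (0 : ℝ) < (A * D - B * C : ℤ) :=
    pos_of_mul_pos_right (hs ▸ one_pos) (sq_nonneg s)
  obtain ⟨e, he⟩ := Int.eq_ofNat_of_zero_le (Int.cast_pos.mp hpos).le
  exact ⟨e, he, by rwa [he, Int.cast_natCast] at hs⟩

theorem isHallDivisor_and_exists_atkinLehner_entries {A B C D : ℤ} {M e : ℕ}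
    (hprim : ∀ z : ℤ, (e : ℤ) ∣ z * A → (e : ℤ) ∣ z * B → (e : ℤ) ∣ z * C → (e : ℤ) ∣ z * D →
      (e : ℤ) ∣ z)
    (hdet : A * D - B * C = e) (he : e ≠ 0) (hAA : (e : ℤ) ∣ A * A) (hAB : (e : ℤ) ∣ A * B)
    (hAC : (e * M : ℤ) ∣ A * C) (hAD : (e : ℤ) ∣ A * D) (hBB : (e : ℤ) ∣ M * B ^ 2)
    (hBD : (e : ℤ) ∣ B * D) (hCC : (e * M : ℤ) ∣ C * C) (hCD : (e * M : ℤ) ∣ C * D)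
    (hDD : (e : ℤ) ∣ D * D) :
    IsHallDivisor e M ∧ ∃ a c d : ℤ, A = e * a ∧ C = M * c ∧ D = e * d := by
  have he' : (e : ℤ) ≠ 0 := by exact_mod_cast he
  have hBC : (e : ℤ) ∣ B * C := by
    rw [show B * C = A * D - e by rw [← hdet]; ring]
    exact dvd_sub hAD dvd_rfl
  obtain ⟨a, rfl⟩ := hprim A hAA hAB (dvd_of_mul_right_dvd hAC) hAD
  obtain ⟨d, rfl⟩ := hprim D (mul_comm _ D ▸ hAD) (mul_comm _ D ▸ hBD)
    (mul_comm _ D ▸ dvd_of_mul_right_dvd hCD) hDD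
  obtain ⟨c', rfl⟩ := hprim C (mul_comm _ C ▸ dvd_of_mul_right_dvd hAC) (mul_comm _ C ▸ hBC)
    (dvd_of_mul_right_dvd hCC) (dvd_of_mul_right_dvd hCD)
  have hdet' : e * a * d - B * c' = 1 := mul_left_cancel₀ he' (by linear_combination hdet)
  have heB : IsCoprime (e : ℤ) (B ^ 2) :=
    IsCoprime.pow_right ⟨a * d, -c', by linear_combination hdet'⟩
  obtain ⟨k, rfl⟩ := Int.natCast_dvd_natCast.mp (heB.dvd_of_dvd_mul_right hBB)
  push_cast at hAC hCC
  have cancel {z : ℤ} (h : (e * (e * k) : ℤ) ∣ e * (e * z)) : (k : ℤ) ∣ z := by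
    rwa [mul_dvd_mul_iff_left he', mul_dvd_mul_iff_left he'] at h
  have hkac : (k : ℤ) ∣ a * c' := cancel (by convert hAC using 1; ring)
  have hkcc : (k : ℤ) ∣ c' * c' := cancel (by convert hCC using 1; ring)
  obtain ⟨c, rfl⟩ : (k : ℤ) ∣ c' := by
    rw [show c' = e * d * (a * c') - B * (c' * c') by linear_combination -c' * hdet']
    exact dvd_sub (hkac.mul_left _) (hkcc.mul_left _)
  have hek : IsCoprime (e : ℤ) k := ⟨a * d, -B * c, by linear_combination hdet'⟩
  exact ⟨⟨k, rfl, Nat.isCoprime_iff_coprime.mp hek⟩, a, c, d, rfl, by push_cast; ring, rfl⟩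

theorem exists_isAtkinLehner_of_eichlerOrder_le_comap (hM : (M : ℝ) ≠ 0)
    (hx : eichlerOrder M ≤ (eichlerOrder M).comap (conjHom x))
    (hxinv : eichlerOrder M ≤ (eichlerOrder M).comap (conjHom x⁻¹)) :
    ∃ e, IsHallDivisor e M ∧ IsAtkinLehner M e x := by
  obtain ⟨h01, h10, h00⟩ := eichlerOrder_le_comap_conjHom_iff.mp hx
  obtain ⟨-, -, h00inv⟩ := eichlerOrder_le_comap_conjHom_iff.mp hxinv
  obtain ⟨t, ht, htx⟩ := exists_ne_zero_forall_mul_mem_of_conjHom_mem hM h01 h00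
  obtain ⟨s, A, B, C, D, hxX, hprim⟩ := exists_eq_smul_primitive_of_forall_mul_mem ht htx
  obtain ⟨e, hdet, hs⟩ := exists_natCast_eq_det hxX
  have he : e ≠ 0 := by exact_mod_cast right_ne_zero_of_mul_eq_one hs
  obtain ⟨haa, -, hcc⟩ := (conjHom_zero_one_mem_iff hM).mp h01
  obtain ⟨hdd, -, hbb⟩ := (conjHom_one_zero_mem_iff hM).mp h10
  obtain ⟨had, hab, hcd, -⟩ := (conjHom_zero_zero_mem_iff hM 1).mp h00
  obtain ⟨-, hdb, hca, -⟩ := (conjHom_zero_zero_mem_iff hM 1).mp h00inv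
  have hinv : (x⁻¹ : SL(2, ℝ)) = s • !![(D : ℝ), -B; -C, A] := by
    rw [Matrix.SpecialLinearGroup.coe_inv, hxX, adjugate_smul, adjugate_fin_two_of]
    simp
  simp only [hinv, hxX, Matrix.smul_apply, of_apply, cons_val', cons_val_zero, cons_val_one,
    cons_val_fin_one, smul_eq_mul] at haa hcc hdd hbb had hab hcd hdb hca
  have dvd {n : ℤ} := dvd_of_mul_mem_intCast_range (n := n) (k := e) (by exact_mod_cast hs)
  have mul_dvd {n : ℤ} := dvd_of_mul_mem_intCast_range (u := s ^ 2 / M) (n := n) (k := e * M)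
    (by push_cast; field_simp; exact hs)
  obtain ⟨hall, a, c, d, rfl, rfl, rfl⟩ :=
    isHallDivisor_and_exists_atkinLehner_entries (hprim e) hdet he
    (dvd (by convert haa using 1; push_cast; ring)) (dvd (by convert hab using 1; push_cast; ring))
    (mul_dvd (by convert neg_mem hca using 1; push_cast; ring))
    (dvd (by convert had using 1; push_cast; ring)) (dvd (by convert hbb using 1; push_cast; ring))
    (dvd (by convert neg_mem hdb using 1; push_cast; ring))
    (mul_dvd (by convert hcc using 1; push_cast; ring))
    (mul_dvd (by convert hcd using 1; push_cast; ring))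
    (dvd (by convert hdd using 1; push_cast; ring))
  exact ⟨e, hall, isAtkinLehner_iff.mpr ⟨s, a, B, c, d, hs, by simpa using hxX⟩⟩

theorem exists_isAtkinLehner_of_diagConj_mem_normalizer {σ q h ε : ℕ} (hσ : σ ≠ 0)
    (hq : Squarefree q) (hσε : σ.Coprime ε) (hε : ε ≠ 0) (hh : (h : ℝ) ≠ 0)
    (hεmem : ((ε * h : ℕ) : ℤ) ∈ AddSubgroup.closure (diagDiffs (σ ^ 2 * q * h ^ 2)))
    (hx : diagConj hh x ∈ Subgroup.normalizer (PMGamma0 (σ ^ 2 * q * h ^ 2))) :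
    ∃ e, IsHallDivisor e (σ ^ 2 * q) ∧ IsAtkinLehner (σ ^ 2 * q) e x := by
  have hxinv : diagConj hh x⁻¹ ∈ Subgroup.normalizer (PMGamma0 (σ ^ 2 * q * h ^ 2)) := by
    rw [map_inv]
    exact inv_mem hx
  exact exists_isAtkinLehner_of_eichlerOrder_le_comap
    (by exact_mod_cast mul_ne_zero (pow_ne_zero 2 hσ) hq.ne_zero)
    (eichlerOrder_le_comap_conjHom hσ hq hσε hε hh hεmem hx)
    (eichlerOrder_le_comap_conjHom hσ hq hσε hε hh hεmem hxinv)

end EichlerOrder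

/-- **Theorem of Atkin–Lehner, Akbas–Singerman, Bars.** With `N = σ² q`, `q` squarefree,
`ε` the gcd of all `a - d` over `Γ₀(N)` and `v(N) = gcd(σ, ε)`: every `g ∈ SL(2, ℝ)`
normalizing `±Γ₀(N)` can be written as `g = ±γ · w_m · Ω` with `γ ∈ Γ₀(N)`, `w_m` an
Atkin–Lehner matrix for a Hall divisor `m` of `N` coprime to `6`, and `Ω` in the subgroup
generated by `S_{v(N)} = !![1, 1/v(N); 0, 1]` and Atkin–Lehner matrices for the Hall
divisors `2^{v₂(N)}` and `3^{v₃(N)}` of `N`. -/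
theorem normalizer_Gamma0_structure
    (N : ℕ) (hN : 0 < N) (σ q : ℕ) (hσ : 0 < σ) (hq : 0 < q) (hqsf : Squarefree q)
    (hNσq : N = σ ^ 2 * q)
    (ε : ℕ)
    (hε : ∀ γ : Matrix.SpecialLinearGroup (Fin 2) ℤ, γ ∈ Gamma0 N →
      (ε : ℤ) ∣ ((γ : Matrix (Fin 2) (Fin 2) ℤ) 0 0 - (γ : Matrix (Fin 2) (Fin 2) ℤ) 1 1))
    (hεgcd : ∀ e : ℕ, (∀ γ : Matrix.SpecialLinearGroup (Fin 2) ℤ, γ ∈ Gamma0 N →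
      (e : ℤ) ∣ ((γ : Matrix (Fin 2) (Fin 2) ℤ) 0 0 - (γ : Matrix (Fin 2) (Fin 2) ℤ) 1 1)) →
      e ∣ ε)
    (v : ℕ) (hv : v = Nat.gcd σ ε)
    (g : Matrix.SpecialLinearGroup (Fin 2) ℝ)
    (hg : g ∈ Subgroup.normalizer (PMGamma0 N)) :
    ∃ m : ℕ, m ∣ N ∧ Nat.gcd m (N / m) = 1 ∧ Nat.gcd m 6 = 1 ∧
      ∃ wm : Matrix.SpecialLinearGroup (Fin 2) ℝ, IsAtkinLehner N m wm ∧
        ∃ Ω ∈ Subgroup.closure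
          ({S : Matrix.SpecialLinearGroup (Fin 2) ℝ |
              (S : Matrix (Fin 2) (Fin 2) ℝ) = !![1, ((v : ℝ))⁻¹; 0, 1]} ∪
            {w | IsAtkinLehner N (2 ^ N.factorization 2) w} ∪
            {w | IsAtkinLehner N (3 ^ N.factorization 3) w}),
          ∃ γ : Matrix.SpecialLinearGroup (Fin 2) ℤ, γ ∈ Gamma0 N ∧
            (g = SL2ZtoSL2R γ * wm * Ω ∨ g = -(SL2ZtoSL2R γ * wm * Ω)) := by
  obtain ⟨σ', ε', hcop, hσ', hε'⟩ := Nat.exists_coprime σ ε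
  rw [← hv] at hσ' hε'
  obtain rfl : N = σ' ^ 2 * q * v ^ 2 := by rw [hNσq, hσ']; ring
  have hdvd : ∀ t ∈ diagDiffs (σ' ^ 2 * q * v ^ 2), (ε : ℤ) ∣ t := by
    rintro _ ⟨γ, hγ, rfl⟩
    exact hε γ hγ
  have hvε : (v : ℤ) ∣ ε := Int.natCast_dvd_natCast.mpr (hv ▸ Nat.gcd_dvd_right σ ε)
  have hv23 : v.primeFactors ⊆ {2, 3} :=
    primeFactors_subset_of_forall_dvd_diagDiffs hN.ne' fun t ht => hvε.trans (hdvd t ht)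
  have hε0 : ε' * v ≠ 0 := hε' ▸ ne_zero_of_dvd_ne_zero hN.ne'
    (Int.natCast_dvd_natCast.mp (hdvd _ natCast_mem_diagDiffs))
  have hv0 : (v : ℝ) ≠ 0 := Nat.cast_ne_zero.mpr (right_ne_zero_of_mul hε0)
  have hεmem : (ε : ℤ) ∈ AddSubgroup.closure (diagDiffs (σ' ^ 2 * q * v ^ 2)) :=
    mem_closure_of_forall_dvd fun e he => hεgcd e fun γ hγ => he _ ⟨γ, hγ, rfl⟩
  obtain ⟨x, rfl⟩ := (diagConj hv0).surjective g
  obtain ⟨e, he, hx⟩ := exists_isAtkinLehner_of_diagConj_mem_normalizer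
    (left_ne_zero_of_mul (hσ' ▸ hσ.ne')) hqsf hcop (left_ne_zero_of_mul hε0) hv0 (hε' ▸ hεmem) hg
  obtain ⟨m, hm, hm6, w, hw, hΩ⟩ := exists_isAtkinLehner_inv_mul_diagConj_mem_closure
    (left_ne_zero_of_mul hN.ne') hv0 hv23 he hx
  exact ⟨m, hm.dvd, hm.gcd_div_eq_one hN, hm6, w, hw, _, hΩ, 1, one_mem _, .inl (by simp)⟩
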